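/- Let n ≥ 2 and let 𝒜 = {[A₁],…,[A_r]} be a malnormal subgroup system of F_n, with L, Γ_i, 𝒞, F_n − 𝒜 and Cyl(𝒞) as in the context. Then ∂²(F_n,𝒜) = ⋃_{C ∈ Cyl(𝒞)} C; that is, a class {ξ,η} ∈ ∂²F_n lies in ∂²(F_n,𝒜) if and only if it belongs to g·C(γ_w) for some g ∈ F_n and some w ∈ F_n − 𝒜. In particular, ∂²(F_n,𝒜) is an open subset of ∂²F_n. -/

import Mathlib

/-!
A pair `{ξ, η}` of distinct boundary points spans a bi-infinite geodesic `ℓ` of the Cayley tree.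
It lies in a cylinder of `Cyl(𝒞)` exactly when some segment of `ℓ` of length `L + 2`, translated to
the base point, is labelled by an element of `𝒞`, i.e. is contained in no tree `T_B` with `[B] ∈ 𝒜`.

If `ξ` and `η` both lie in `∂B`, then `ℓ ⊆ T_B` (`pt_mem_tree`): after moving the base point to a
vertex of `ℓ`, the subgroup contains two elements starting with different letters, and one of them
or their product is cyclically reduced (`one_mem_tree`). So no segment of `ℓ` has a label in `𝒞`
(`not_limit_of_prefix_mem`).

Conversely, suppose every segment of length `L + 2` of `ℓ` lies in the tree of some subgroup of the
system (`segment_in_tree`). Consecutive segments overlap in length `L + 1`, which exceeds the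
diameter bound for two different trees, so one tree `T_B` contains all of `ℓ` (`ray_in_tree`,
`limit_of_noCyl`). Every vertex of `T_B` lies on the axis of an element of `B` and hence is a prefix
of an element of `B` (`exists_prefix_of_mem_tree`); therefore both ends of `ℓ` are in `∂B`.

The action on the boundary is handled through the relation `IsTr`, which says that a translation
maps a tail of one ray onto a tail of another; it determines `bAct` uniquely (`bAct_eq_iff`).
Openness holds because cylinders are open and the group acts by homeomorphisms.
-/

open scoped Classical
open MeasureTheory

noncomputable section

namespace RelCurr

/-- The alphabet `𝔄 = ℬ ∪ ℬ⁻¹`: a letter is a generator together with a sign. -/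
abbrev Letter (n : ℕ) := Fin n × Bool

/-- The inverse of a letter. -/
def linv {n : ℕ} (x : Letter n) : Letter n := (x.1, !x.2)

/-- The free group of rank `n` on the basis `Fin n`. -/
abbrev F (n : ℕ) := FreeGroup (Fin n)

/-- The reduced word of an element of `F n`. -/
def rword {n : ℕ} (g : F n) : List (Letter n) := FreeGroup.toWord g

/-- The length `|g|` of the reduced word of `g`. -/
def wlen {n : ℕ} (g : F n) : ℕ := (rword g).length

/-- The single-letter element of `F n` given by a letter. -/
def letterE {n : ℕ} (b : Letter n) : F n := FreeGroup.mk [b]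

/-- The conjugate subgroup `g A g⁻¹`. -/
def conjSub {n : ℕ} (g : F n) (A : Subgroup (F n)) : Subgroup (F n) :=
  Subgroup.map (MulAut.conj g).toMonoidHom A

/-- A subgroup `A` is malnormal if `xAx⁻¹ ∩ A = {1}` for every `x ∉ A`. -/
def Malnormal {n : ℕ} (A : Subgroup (F n)) : Prop :=
  ∀ x : F n, x ∉ A → conjSub x A ⊓ A = ⊥

/-- The word metric on the Cayley tree `T`. -/
def dist' {n : ℕ} (x y : F n) : ℕ := wlen (x⁻¹ * y)

/-- The cyclically reduced length of `a`. -/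
def cycLen {n : ℕ} (a : F n) : ℕ := sInf { m | ∃ h : F n, wlen (h⁻¹ * a * h) = m }

/-- The vertex set of the minimal `A`-invariant subtree `T_A` of the Cayley tree:
the union of the axes of the nontrivial elements of `A`. -/
def treeVerts {n : ℕ} (A : Subgroup (F n)) : Set (F n) :=
  { h | ∃ a ∈ A, a ≠ 1 ∧ wlen (h⁻¹ * a * h) = cycLen a }

/-- `γ_w ⊆ S`: every prefix of the reduced word of `w` lies in the vertex set `S`. -/
def pathIn {n : ℕ} (w : F n) (S : Set (F n)) : Prop :=
  ∀ m ≤ wlen w, FreeGroup.mk ((rword w).take m) ∈ S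

/-- An element is cyclically reduced if the last letter of its reduced word is not the
inverse of the first letter. -/
def CyclicallyReduced {n : ℕ} (w : F n) : Prop :=
  ∀ x y : Letter n, (rword w).head? = some x → (rword w).getLast? = some y → y ≠ linv x

/-- `v` is a length-one extension of `w`. -/
def LengthOneExt {n : ℕ} (w v : F n) : Prop :=
  ∃ b : Letter n, v = w * letterE b ∧ wlen v = wlen w + 1

/-- `a` is an extension of `w`: the reduced word of `w` is a proper prefix of that of `a`. -/
def ExtensionOf {n : ℕ} (w a : F n) : Prop :=
  rword w <+: rword a ∧ wlen w < wlen a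

/-- `g` is a proper power. -/
def IsProperPower {n : ℕ} (g : F n) : Prop := ∃ (h : F n) (k : ℕ), 2 ≤ k ∧ g = h ^ k

section System

variable {n r : ℕ} (A : Fin r → Subgroup (F n))

/-- `[B] ∈ 𝒜`, i.e. `B` is a conjugate of one of the subgroups of the system. -/
def InSystem (B : Subgroup (F n)) : Prop := ∃ (i : Fin r) (g : F n), B = conjSub g (A i)

/-- The family `A` represents a subgroup system: finite rank subgroups distinct
from `{1}` and `F n`. -/
def IsSystem : Prop := (∀ i, (A i).FG) ∧ (∀ i, A i ≠ ⊥) ∧ (∀ i, A i ≠ ⊤)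

/-- The subgroup system is malnormal. -/
def SystemMalnormal : Prop :=
  (∀ i, Malnormal (A i)) ∧
  ∀ B₁ B₂ : Subgroup (F n), InSystem A B₁ → InSystem A B₂ → B₁ ≠ B₂ → B₁ ⊓ B₂ = ⊥

/-- `g` is `𝒜`-peripheral: trivial or contained in a conjugate of one of the `A i`. -/
def Peripheral (g : F n) : Prop := g = 1 ∨ ∃ B, InSystem A B ∧ g ∈ B

/-- The diameter of the intersection of the trees of two distinct subgroups of the
system is at most `L`. -/
def DiamBound (L : ℕ) : Prop :=
  ∀ B₁ B₂ : Subgroup (F n), InSystem A B₁ → InSystem A B₂ → B₁ ≠ B₂ →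
    ∀ x ∈ treeVerts B₁ ∩ treeVerts B₂, ∀ y ∈ treeVerts B₁ ∩ treeVerts B₂, dist' x y ≤ L

/-- `B ∈ Γ_i`: `B` is a conjugate of `A i` whose tree contains the base point `1`. -/
def GammaMem (i : Fin r) (B : Subgroup (F n)) : Prop :=
  (∃ g : F n, B = conjSub g (A i)) ∧ (1 : F n) ∈ treeVerts B

/-- The finite set `𝒞` of words of length `L+2` whose path is contained in no tree
`T_B` with `B ∈ Γ_i`, for every `i`. -/
def Ccal (L : ℕ) : Set (F n) :=
  { w | wlen w = L + 2 ∧ ∀ (i : Fin r) (B : Subgroup (F n)), GammaMem A i B →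
      ¬ pathIn w (treeVerts B) }

/-- `F_n − 𝒜`: the words containing an element of `𝒞` as a contiguous subword. -/
def FmA (L : ℕ) : Set (F n) := { w | ∃ x ∈ Ccal A L, rword x <:+: rword w }

/-- `S_k`: words of length `k` not containing any element of `𝒞` as a subword. -/
def Sk (L k : ℕ) : Set (F n) := { w | wlen w = k ∧ w ∉ FmA A L }

end System

/-! ### The boundary of `F n` -/

/-- An infinite reduced word. -/
def IsRed {n : ℕ} (ξ : ℕ → Letter n) : Prop := ∀ i, ξ (i + 1) ≠ linv (ξ i)

/-- The Gromov boundary `∂F_n`, realized as the space of infinite reduced words,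
topologized as a subspace of the product space. -/
def Boundary (n : ℕ) : Type := { ξ : ℕ → Letter n // IsRed ξ }

instance {n : ℕ} : TopologicalSpace (Boundary n) :=
  instTopologicalSpaceSubtype

/-- The length-`m` prefix of a boundary point. -/
def bpre {n : ℕ} (ξ : Boundary n) (m : ℕ) : List (Letter n) :=
  (List.range m).map ξ.1

/-- The reduced word of `w` is a prefix of the infinite word `ξ`. -/
def wordPrefixOf {n : ℕ} (w : F n) (ξ : Boundary n) : Prop :=
  bpre ξ (wlen w) = rword w

/-- The boundary (limit set) `∂A ⊆ ∂F_n` of a subgroup `A`. -/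
def limitSet {n : ℕ} (A : Subgroup (F n)) : Set (Boundary n) :=
  { ξ | ∀ m : ℕ, ∃ a ∈ A, bpre ξ m <+: rword a }

/-- `ξ = g^{+∞}`: `ξ` is the limit of the reduced words of the powers of `g`. -/
def IsPosLimit {n : ℕ} (g : F n) (ξ : Boundary n) : Prop :=
  ∀ m : ℕ, ∃ N : ℕ, ∀ k ≥ N, bpre ξ m <+: rword (g ^ k)

/-- The number of letters cancelled when concatenating the word `l` with the
infinite reduced word `ξ`. -/
def cancelLen {n : ℕ} (l : List (Letter n)) (ξ : ℕ → Letter n) : ℕ :=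
  sSup { j | j ≤ l.length ∧ ∀ i < j, l.reverse[i]? = some (linv (ξ i)) }

/-- The sequence underlying the action of `g` on a boundary point: left multiplication
followed by cancellation. -/
def actSeq {n : ℕ} (g : F n) (ξ : ℕ → Letter n) : ℕ → Letter n :=
  fun m =>
    if h : m < (rword g).length - cancelLen (rword g) ξ then
      (rword g).get ⟨m, by omega⟩
    else ξ (m - ((rword g).length - cancelLen (rword g) ξ) + cancelLen (rword g) ξ)

/-- The action of `F n` on its boundary: left multiplication followed by cancellation.
(The sequence `actSeq g ξ.1` is always reduced, so the first branch always applies.) -/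
def bAct {n : ℕ} (g : F n) (ξ : Boundary n) : Boundary n :=
  if h : IsRed (actSeq g ξ.1) then ⟨actSeq g ξ.1, h⟩ else ξ

/-! ### The double boundary -/

/-- The diagonal action of `F n` on `Sym2 (∂F_n)`, whose restriction to the set of
non-diagonal classes is the action on the double boundary `∂²F_n`. -/
def dbAct {n : ℕ} (g : F n) : Sym2 (Boundary n) → Sym2 (Boundary n) := Sym2.map (bAct g)

/-- `∂²𝒜`: the classes `{ξ,η}` with both endpoints in `g·∂A_i = ∂(gA_ig⁻¹)` for some
`i` and `g`. -/
def dblBndA {n r : ℕ} (A : Fin r → Subgroup (F n)) : Set (Sym2 (Boundary n)) :=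
  { z | ∃ (i : Fin r) (g : F n) (ξ η : Boundary n), z = s(ξ, η) ∧
      ξ ∈ limitSet (conjSub g (A i)) ∧ η ∈ limitSet (conjSub g (A i)) }

/-- The double boundary `∂²(F_n,𝒜)` of `F n` relative to `𝒜`, as a subset of
`Sym2 (∂F_n)`: non-diagonal classes not lying in `∂²𝒜`. -/
def relSet {n r : ℕ} (A : Fin r → Subgroup (F n)) : Set (Sym2 (Boundary n)) :=
  { z | ¬ z.IsDiag } \ dblBndA A

/-- The cylinder set `C(γ_w) ⊆ ∂²F_n` of the geodesic path from `1` to `w`. -/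
def cylinder {n : ℕ} (w : F n) : Set (Sym2 (Boundary n)) :=
  { z | ∃ ξ η : Boundary n, z = s(ξ, η) ∧ ξ.1 0 ≠ η.1 0 ∧
      (wordPrefixOf w ξ ∨ wordPrefixOf w η) }

instance {n : ℕ} : MeasurableSpace (Sym2 (Boundary n)) := borel _

/-- The action of `g ∈ F n` on `∂²(F_n,𝒜)`. (The action of `F n` preserves
`∂²(F_n,𝒜)`, so the first branch always applies.) -/
def relAct {n r : ℕ} (A : Fin r → Subgroup (F n)) (g : F n) (z : ↥(relSet A)) :
    ↥(relSet A) :=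
  if h : dbAct g z.1 ∈ relSet A then ⟨dbAct g z.1, h⟩ else z

/-- The cylinder `C(γ_w)` as a subset of `∂²(F_n,𝒜)`. -/
def relCyl {n r : ℕ} (A : Fin r → Subgroup (F n)) (w : F n) : Set ↥(relSet A) :=
  Subtype.val ⁻¹' cylinder w

/-- The translated cylinder `g·C(γ_w)` as a subset of `∂²(F_n,𝒜)`. -/
def relCylG {n r : ℕ} (A : Fin r → Subgroup (F n)) (g w : F n) : Set ↥(relSet A) :=
  Subtype.val ⁻¹' (dbAct g '' cylinder w)

/-- A relative current on `(F_n,𝒜)`: an `F_n`-invariant Radon measure on the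
locally compact space `∂²(F_n,𝒜)` (finite on compacts, outer regular, inner regular
on open sets). -/
def IsRelCurrent {n r : ℕ} (A : Fin r → Subgroup (F n)) (μ : Measure ↥(relSet A)) : Prop :=
  (∀ (g : F n) (s : Set ↥(relSet A)), MeasurableSet s → μ (relAct A g ⁻¹' s) = μ s) ∧
  μ.Regular

/-- The `F_n`-orbit of a point of `Sym2 (∂F_n)`, inside `∂²(F_n,𝒜)`. -/
def orbitOf {n r : ℕ} (A : Fin r → Subgroup (F n)) (z : Sym2 (Boundary n)) :
    Set ↥(relSet A) :=
  { y | ∃ h : F n, (y : Sym2 (Boundary n)) = dbAct h z }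


section Aux

/-! ### Reduced words and cancellation -/

variable {n : ℕ}

theorem linv_linv (x : Letter n) : linv (linv x) = x := by
  simp [linv]

theorem rel_iff (a b : Letter n) : (a.1 = b.1 → a.2 = b.2) ↔ b ≠ linv a := by
  obtain ⟨i, s⟩ := a
  obtain ⟨j, t⟩ := b
  cases s <;> cases t <;> simp [linv, eq_comm]

theorem isReduced_iff (l : List (Letter n)) :
    FreeGroup.IsReduced l ↔ l.IsChain (fun a b => b ≠ linv a) := by
  unfold FreeGroup.IsReduced
  simp only [rel_iff]

theorem rword_mk {l : List (Letter n)} (h : FreeGroup.IsReduced l) :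
    rword (FreeGroup.mk l) = l := h.reduce_eq

theorem mk_rword (g : F n) : FreeGroup.mk (rword g) = g := FreeGroup.mk_toWord

theorem rword_red (g : F n) : FreeGroup.IsReduced (rword g) := FreeGroup.isReduced_toWord

theorem wlen_mul_le (x y : F n) : wlen (x * y) ≤ wlen x + wlen y := FreeGroup.norm_mul_le x y

theorem wlen_inv (x : F n) : wlen x⁻¹ = wlen x := FreeGroup.norm_inv_eq

theorem wlen_mk_le (l : List (Letter n)) : wlen (FreeGroup.mk l) ≤ l.length :=
  FreeGroup.norm_mk_le

theorem mk_linv (b : Letter n) : (FreeGroup.mk [linv b] : F n) = (FreeGroup.mk [b])⁻¹ := by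
  simp [FreeGroup.inv_mk, FreeGroup.invRev, linv]

theorem invRev_eq (l : List (Letter n)) : FreeGroup.invRev l = (l.map linv).reverse := by
  rfl

/-- Bounded cancellation: right multiplication by a word of length `k` erases at most the last
`k` letters of a reduced word. -/
theorem prefix_mul_mk (w : List (Letter n)) : ∀ (x : F n) (l t : List (Letter n)),
    rword x = l ++ t → w.length ≤ t.length → l <+: rword (x * FreeGroup.mk w) := by
  induction w with
  | nil =>
    intro x l t hx _
    have : x * FreeGroup.mk [] = x := by
      rw [← FreeGroup.one_eq_mk, mul_one]
    rw [this, hx]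
    exact List.prefix_append _ _
  | cons b w ih =>
    intro x l t hx hlen
    have hsplit : x * FreeGroup.mk (b :: w) = (x * FreeGroup.mk [b]) * FreeGroup.mk w := by
      rw [mul_assoc, FreeGroup.mul_mk]; rfl
    rw [hsplit]
    rcases List.eq_nil_or_concat t with rfl | ⟨t0, e, rfl⟩
    · simp at hlen
    have hred : FreeGroup.IsReduced (l ++ (t0 ++ [e])) := by
      rw [List.concat_eq_append] at hx
      rw [← hx]; exact rword_red x
    rw [List.concat_eq_append] at hx hlen
    have hxm : x = FreeGroup.mk (l ++ (t0 ++ [e])) := by rw [← hx, mk_rword]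
    by_cases hb : b = linv e
    · apply ih _ l t0
      · have : x * FreeGroup.mk [b] = FreeGroup.mk (l ++ t0) := by
          rw [hxm, hb, mk_linv, ← List.append_assoc, ← FreeGroup.mul_mk]
          group
        rw [this]
        exact rword_mk (hred.infix ⟨[], [e], by simp⟩)
      · simp at hlen ⊢; omega
    · apply ih _ l (t0 ++ [e] ++ [b])
      · rw [hxm, FreeGroup.mul_mk, rword_mk]
        · simp
        · rw [isReduced_iff] at hred ⊢
          rw [← List.append_assoc] at hred ⊢
          refine List.isChain_append.2 ⟨hred, by simp, ?_⟩
          intro u hu v hv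
          simp at hu hv
          subst hu; subst hv
          exact hb
      · simp at hlen ⊢; omega

theorem prefix_mul (x y : F n) (l t : List (Letter n)) (hx : rword x = l ++ t)
    (h : wlen y ≤ t.length) : l <+: rword (x * y) := by
  have := prefix_mul_mk (rword y) x l t hx h
  rwa [mk_rword] at this

/-! ### Cyclically reduced elements and the minimal subtree -/

theorem wlen_pow_le (x : F n) (N : ℕ) : wlen (x ^ N) ≤ N * wlen x := by
  induction N with
  | zero => simp [wlen, rword]
  | succ N ih =>
    rw [pow_succ]
    have := wlen_mul_le (x ^ N) x
    linarith [add_mul N 1 (wlen x)]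

theorem rword_pow {c : F n} (h : FreeGroup.IsCyclicallyReduced (rword c)) (N : ℕ) :
    rword (c ^ N) = (List.replicate N (rword c)).flatten := by
  exact (FreeGroup.toWord_pow c N).trans
    (FreeGroup.IsReduced.reduce_eq (h.flatten_replicate N).isReduced)

/-- A cyclically reduced element is shortest in its conjugacy class: otherwise its `N`-th power
would be too long for large `N`. -/
theorem cycRed_le {c : F n} (hc : FreeGroup.IsCyclicallyReduced (rword c)) (h : F n) :
    wlen c ≤ wlen (h⁻¹ * c * h) := by
  by_contra hlt
  push Not at hlt
  set k := h⁻¹ * c * h with hk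
  set N := 2 * wlen h + 1 with hN
  have h1 : wlen (c ^ N) = N * wlen c := by
    unfold wlen
    rw [rword_pow hc]; simp
  have h2 : c ^ N = h * k ^ N * h⁻¹ := by
    have : c = h * k * h⁻¹ := by rw [hk]; group
    rw [this, conj_pow]
  have h3 : wlen (c ^ N) ≤ wlen h + N * wlen k + wlen h := by
    rw [h2]
    have a1 := wlen_mul_le (h * k ^ N) h⁻¹
    have a2 := wlen_mul_le h (k ^ N)
    have a3 := wlen_pow_le k N
    rw [wlen_inv] at a1
    omega
  have h4 : N * (wlen k + 1) ≤ N * wlen c := Nat.mul_le_mul_left _ hlt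
  rw [mul_add] at h4
  omega

theorem cycRed_of_le {c : F n} (hc : ∀ h : F n, wlen c ≤ wlen (h⁻¹ * c * h)) :
    FreeGroup.IsCyclicallyReduced (rword c) := by
  have key := FreeGroup.reduceCyclically.conj_conjugator_reduceCyclically (rword c)
  set u := FreeGroup.reduceCyclically.conjugator (rword c) with hu
  set v := FreeGroup.reduceCyclically (rword c) with hv
  have hcv : (FreeGroup.mk u)⁻¹ * c * FreeGroup.mk u = FreeGroup.mk v := by
    conv_lhs => rw [← mk_rword c, ← key]
    rw [← FreeGroup.mul_mk, ← FreeGroup.mul_mk, ← FreeGroup.inv_mk]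
    group
  have h1 := hc (FreeGroup.mk u)
  rw [hcv] at h1
  have h2 := wlen_mk_le v
  have h3 : wlen c = u.length + v.length + u.length := by
    unfold wlen
    conv_lhs => rw [← key]
    simp [add_assoc]
  have hu0 : u = [] := List.length_eq_zero_iff.1 (by omega)
  have : rword c = v := by rw [← key, hu0]; simp [FreeGroup.invRev]
  rw [this]
  exact FreeGroup.reduceCyclically.isCyclicallyReduced (rword_red c)

theorem cycLen_conj_iff (a h : F n) :
    wlen (h⁻¹ * a * h) = cycLen a ↔ FreeGroup.IsCyclicallyReduced (rword (h⁻¹ * a * h)) := by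
  constructor
  · intro heq
    apply cycRed_of_le
    intro k
    rw [heq]
    refine Nat.sInf_le ⟨h * k, ?_⟩
    congr 1; group
  · intro hc
    apply le_antisymm
    · obtain ⟨k, hk⟩ := Nat.sInf_mem (s := {m | ∃ h : F n, wlen (h⁻¹ * a * h) = m}) ⟨_, h, rfl⟩
      unfold cycLen
      rw [← hk]
      have := cycRed_le hc (h⁻¹ * k)
      have heq : (h⁻¹ * k)⁻¹ * (h⁻¹ * a * h) * (h⁻¹ * k) = k⁻¹ * a * k := by group
      rwa [heq] at this
    · exact Nat.sInf_le ⟨h, rfl⟩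

theorem mem_tree_iff (B : Subgroup (F n)) (h : F n) :
    h ∈ treeVerts B ↔
      ∃ a ∈ B, a ≠ 1 ∧ FreeGroup.IsCyclicallyReduced (rword (h⁻¹ * a * h)) := by
  unfold treeVerts
  simp only [Set.mem_ofPred_eq, cycLen_conj_iff]

theorem mem_conjSub (g x : F n) (B : Subgroup (F n)) :
    x ∈ conjSub g B ↔ g⁻¹ * x * g ∈ B := by
  unfold conjSub
  constructor
  · rintro ⟨b, hb, rfl⟩
    have : g⁻¹ * (g * b * g⁻¹) * g = b := by group
    simpa [this] using hb
  · intro h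
    refine ⟨_, h, ?_⟩
    simp [mul_assoc]

theorem conjSub_conjSub (g h : F n) (B : Subgroup (F n)) :
    conjSub g (conjSub h B) = conjSub (g * h) B := by
  ext x
  simp only [mem_conjSub, mul_inv_rev, mul_assoc]

theorem conjSub_one (B : Subgroup (F n)) : conjSub 1 B = B := by
  ext x
  simp [mem_conjSub]

theorem mem_tree_conj (g h : F n) (B : Subgroup (F n)) :
    g * h ∈ treeVerts (conjSub g B) ↔ h ∈ treeVerts B := by
  simp only [mem_tree_iff, mem_conjSub]
  constructor
  · rintro ⟨a, ha, h1, hc⟩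
    refine ⟨_, ha, ?_, ?_⟩
    · intro h0
      apply h1
      have : a = g * (g⁻¹ * a * g) * g⁻¹ := by group
      rw [this, h0]; group
    · convert hc using 2; group
  · rintro ⟨a, ha, h1, hc⟩
    refine ⟨g * a * g⁻¹, ?_, ?_, ?_⟩
    · convert ha using 1; group
    · simpa using h1
    · convert hc using 2; group

/-- If two elements of `B` begin with different letters, the base point lies in `T_B`: either one
of the two elements is cyclically reduced, or their product is. -/
theorem one_mem_tree {B : Subgroup (F n)} {a b : F n} (ha : a ∈ B) (hb : b ∈ B) {s t : Letter n}
    (hs : (rword a).head? = some s) (ht : (rword b).head? = some t) (hst : s ≠ t) :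
    (1 : F n) ∈ treeVerts B := by
  have hne : ∀ (x : F n) (y : Letter n), (rword x).head? = some y → x ≠ 1 := by
    rintro x y hx rfl
    simp [rword] at hx
  have key : ∀ (x : F n) (y : Letter n), x ∈ B → (rword x).head? = some y →
      (1 : F n) ∈ treeVerts B ∨ (rword x).getLast? = some (linv y) := by
    intro x y hx hy
    by_cases hl : (rword x).getLast? = some (linv y)
    · exact Or.inr hl
    · left
      rw [mem_tree_iff]
      refine ⟨x, hx, hne x y hy, ?_⟩
      have : (1 : F n)⁻¹ * x * 1 = x := by group
      rw [this]
      refine ⟨rword_red x, ?_⟩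
      intro u hu v hv
      rw [rel_iff]
      rintro rfl
      rw [hy] at hv
      simp at hv
      apply hl
      rw [hv, linv_linv]
      exact hu
  rcases key a s ha hs with h | hal
  · exact h
  rcases key b t hb ht with h | hbl
  · exact h
  rw [mem_tree_iff]
  have hred : FreeGroup.IsReduced (rword a ++ rword b) := by
    rw [isReduced_iff, List.isChain_append]
    refine ⟨(isReduced_iff _).1 (rword_red a), (isReduced_iff _).1 (rword_red b), ?_⟩
    intro x hx y hy
    rw [hal] at hx
    rw [ht] at hy
    simp at hx hy
    rw [← hx, ← hy, linv_linv]
    exact hst.symm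
  have hab : rword (a * b) = rword a ++ rword b := by
    conv_lhs => rw [← mk_rword a, ← mk_rword b, FreeGroup.mul_mk]
    exact rword_mk hred
  refine ⟨a * b, B.mul_mem ha hb, ?_, ?_⟩
  · apply hne _ s
    rw [hab, List.head?_append, hs]; rfl
  · have : (1 : F n)⁻¹ * (a * b) * 1 = a * b := by group
    rw [this]
    refine ⟨rword_red _, ?_⟩
    intro u hu v hv
    rw [hab, List.getLast?_append, hbl] at hu
    rw [hab, List.head?_append, hs] at hv
    simp at hu hv
    rw [rel_iff, ← hu, ← hv, linv_linv]
    exact hst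

/-- Auxiliary form of `exists_prefix_of_mem_tree`, in the case where the axis of `a` leaves `h`
in the direction of `a` without backtracking towards the base point. -/
theorem exists_prefix_aux {B : Subgroup (F n)} {h a : F n} (ha : a ∈ B) (h1 : a ≠ 1)
    (hc : FreeGroup.IsCyclicallyReduced (rword (h⁻¹ * a * h)))
    (hred : FreeGroup.IsReduced (rword h ++ rword (h⁻¹ * a * h))) :
    ∃ b ∈ B, rword h <+: rword b := by
  set c := h⁻¹ * a * h with hcdef
  set N := wlen h + 1 with hN
  have hcne : c ≠ 1 := by
    intro h0
    apply h1
    have : a = h * c * h⁻¹ := by rw [hcdef]; group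
    rw [this, h0]; group
  have hclen : 1 ≤ (rword c).length := by
    rw [Nat.one_le_iff_ne_zero, Ne, List.length_eq_zero_iff]
    intro h0
    apply hcne
    rw [← mk_rword c, h0, FreeGroup.one_eq_mk]
  have hr : FreeGroup.IsReduced (rword h ++ (List.replicate N (rword c)).flatten) := by
    have := FreeGroup.IsReduced.append_flatten_replicate_append (L₁ := rword h) (L₃ := []) hc
      (by simpa using hred) (n := N) (by omega)
    simpa using this
  have hw : rword (h * c ^ N) = rword h ++ (List.replicate N (rword c)).flatten := by
    conv_lhs => rw [← mk_rword h, ← mk_rword (c ^ N), rword_pow hc, FreeGroup.mul_mk]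
    exact rword_mk hr
  refine ⟨a ^ N, B.pow_mem ha N, ?_⟩
  have : a ^ N = (h * c ^ N) * h⁻¹ := by
    have : a = h * c * h⁻¹ := by rw [hcdef]; group
    rw [this, conj_pow]
  rw [this]
  apply prefix_mul _ _ _ _ hw
  rw [wlen_inv]
  simp only [List.length_flatten, List.map_replicate, List.sum_replicate, smul_eq_mul]
  nlinarith

/-- Every vertex of `T_B` is a prefix of an element of `B`: it lies on the axis of some `a ∈ B`,
and at least one of the two ends of this axis lies beyond it, so a large power of `a` or `a⁻¹`
begins with it. -/
theorem exists_prefix_of_mem_tree {B : Subgroup (F n)} {h : F n} (hh : h ∈ treeVerts B) :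
    ∃ b ∈ B, rword h <+: rword b := by
  obtain ⟨a, ha, h1, hc⟩ := (mem_tree_iff _ _).1 hh
  have hinv : h⁻¹ * a⁻¹ * h = (h⁻¹ * a * h)⁻¹ := by group
  by_cases hred : FreeGroup.IsReduced (rword h ++ rword (h⁻¹ * a * h))
  · exact exists_prefix_aux ha h1 hc hred
  have hrinv : rword (h⁻¹ * a⁻¹ * h) = ((rword (h⁻¹ * a * h)).map linv).reverse := by
    rw [hinv]; exact FreeGroup.toWord_inv _
  rw [isReduced_iff, List.isChain_append] at hred
  have hh' := (isReduced_iff _).1 (rword_red h)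
  have hc' := (isReduced_iff _).1 hc.1
  push Not at hred
  obtain ⟨x, hx, y, hy, hxy⟩ := hred hh' hc'
  refine exists_prefix_aux (B.inv_mem ha) (inv_ne_one.2 h1) ?_ ?_
  · refine ⟨rword_red _, ?_⟩
    intro u hu v hv
    rw [hrinv] at hu hv
    simp only [List.getLast?_reverse, List.head?_map, List.head?_reverse, List.getLast?_map,
      Option.mem_def, Option.map_eq_some_iff] at hu hv
    obtain ⟨u', hu', rfl⟩ := hu
    obtain ⟨v', hv', rfl⟩ := hv
    have := hc.2 v' hv' u' hu'
    simp only [linv]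
    intro h; rw [this h.symm]
  · rw [isReduced_iff, List.isChain_append]
    refine ⟨hh', (isReduced_iff _).1 (rword_red _), ?_⟩
    intro u hu v hv
    rw [hrinv] at hv
    simp only [List.getLast?_map, List.head?_reverse,
      Option.mem_def, Option.map_eq_some_iff] at hv
    obtain ⟨v', hv', rfl⟩ := hv
    have h3 := (rel_iff _ _).1 (hc.2 v' hv' y hy)
    rw [Option.mem_def] at hx hu
    rw [hx] at hu
    obtain rfl := Option.some.inj hu
    intro h4
    apply h3
    rw [hxy, ← h4]

/-! ### Boundary points and the action -/

/-- The `m`-th vertex of the ray from the base point to the boundary point `ξ`. -/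
def pt (ξ : Boundary n) (m : ℕ) : F n := FreeGroup.mk (bpre ξ m)

theorem length_bpre (ξ : Boundary n) (m : ℕ) : (bpre ξ m).length = m := by
  simp [bpre]

theorem bpre_red (ξ : Boundary n) (m : ℕ) : FreeGroup.IsReduced (bpre ξ m) := by
  rw [isReduced_iff, List.isChain_iff_getElem]
  intro i hi
  simpa [bpre] using ξ.2 i

theorem rword_pt (ξ : Boundary n) (m : ℕ) : rword (pt ξ m) = bpre ξ m :=
  rword_mk (bpre_red ξ m)

theorem wlen_pt (ξ : Boundary n) (m : ℕ) : wlen (pt ξ m) = m := by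
  unfold wlen
  rw [rword_pt, length_bpre]

theorem pt_zero (ξ : Boundary n) : pt ξ 0 = 1 := by
  simp [pt, bpre, FreeGroup.one_eq_mk]

theorem bpre_add (ξ : Boundary n) (a b : ℕ) :
    bpre ξ (a + b) = bpre ξ a ++ (List.range b).map (fun i => ξ.1 (a + i)) := by
  simp [bpre, List.range_add, Function.comp_def]

theorem bpre_isPrefix_bpre (ξ : Boundary n) {a b : ℕ} (h : a ≤ b) : bpre ξ a <+: bpre ξ b := by
  obtain ⟨c, rfl⟩ := Nat.exists_eq_add_of_le h
  rw [bpre_add]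
  exact List.prefix_append _ _

theorem take_bpre (ξ : Boundary n) {a b : ℕ} (h : a ≤ b) : (bpre ξ b).take a = bpre ξ a := by
  have := List.prefix_iff_eq_take.1 (bpre_isPrefix_bpre ξ h)
  rw [length_bpre] at this
  exact this.symm

theorem pt_succ (ξ : Boundary n) (m : ℕ) : pt ξ (m + 1) = pt ξ m * FreeGroup.mk [ξ.1 m] := by
  unfold pt
  rw [bpre_add, FreeGroup.mul_mk]
  rfl

theorem mk_singleton_inj {a b : Letter n} (h : (FreeGroup.mk [a] : F n) = FreeGroup.mk [b]) :
    a = b := by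
  have := congrArg rword h
  rw [rword_mk FreeGroup.IsReduced.singleton, rword_mk FreeGroup.IsReduced.singleton] at this
  simpa using this

theorem boundary_ext {ξ ζ : Boundary n} (h : ∀ i, ξ.1 i = ζ.1 i) : ξ = ζ :=
  Subtype.ext (funext h)

/-- `IsTr g ξ ζ` expresses `g · ξ = ζ` in terms of rays: left translation by `g` maps a tail of
the ray to `ξ` onto a tail of the ray to `ζ`. -/
def IsTr (g : F n) (ξ ζ : Boundary n) : Prop :=
  ∃ c d : ℕ, ∀ m, g * pt ξ (c + m) = pt ζ (d + m)

theorem IsTr.symm {g : F n} {ξ ζ : Boundary n} (h : IsTr g ξ ζ) : IsTr g⁻¹ ζ ξ := by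
  obtain ⟨c, d, h⟩ := h
  exact ⟨d, c, fun m => by rw [← h]; group⟩

theorem IsTr.trans {g h : F n} {ξ ζ θ : Boundary n} (h1 : IsTr g ξ ζ) (h2 : IsTr h ζ θ) :
    IsTr (h * g) ξ θ := by
  obtain ⟨c, d, h1⟩ := h1
  obtain ⟨c', d', h2⟩ := h2
  refine ⟨c + c', d' + d, fun m => ?_⟩
  rw [mul_assoc, add_assoc, h1, add_assoc d', ← h2]
  congr 2; omega

theorem IsTr.refl (ξ : Boundary n) : IsTr 1 ξ ξ := ⟨0, 0, fun m => by rw [one_mul]⟩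

theorem IsTr.unique {g : F n} {ξ ζ θ : Boundary n} (h1 : IsTr g ξ ζ) (h2 : IsTr g ξ θ) :
    ζ = θ := by
  have h := h1.symm.trans h2
  rw [mul_inv_cancel] at h
  obtain ⟨c, d, h⟩ := h
  have hw : ∀ m, bpre ζ (c + m) = bpre θ (d + m) := by
    intro m
    have := congrArg rword (h m)
    rwa [one_mul, rword_pt, rword_pt] at this
  have hcd : c = d := by
    have := congrArg List.length (hw 0)
    simpa [length_bpre] using this
  subst hcd
  apply boundary_ext
  intro i
  have := congrArg (fun l => l[i]?) (hw (i + 1))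
  simp only [bpre, List.getElem?_map] at this
  rw [List.getElem?_range (by omega)] at this
  simpa using this

theorem IsTr.tail {g : F n} {ξ ζ : Boundary n} {c d : ℕ}
    (h : ∀ m, g * pt ξ (c + m) = pt ζ (d + m)) (m : ℕ) : ξ.1 (c + m) = ζ.1 (d + m) := by
  have h1 := h (m + 1)
  rw [← add_assoc, ← add_assoc, pt_succ, pt_succ, ← mul_assoc, h m] at h1
  exact mk_singleton_inj (mul_left_cancel h1)

theorem cancelLen_mem (l : List (Letter n)) (ξ : ℕ → Letter n) :
    cancelLen l ξ ≤ l.length ∧ ∀ i < cancelLen l ξ, l.reverse[i]? = some (linv (ξ i)) := by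
  have := Nat.sSup_mem (s := {j | j ≤ l.length ∧ ∀ i < j, l.reverse[i]? = some (linv (ξ i))})
    ⟨0, by simp⟩ ⟨l.length, fun j hj => hj.1⟩
  exact this

theorem cancelLen_max (l : List (Letter n)) (ξ : ℕ → Letter n) (h : cancelLen l ξ < l.length) :
    l.reverse[cancelLen l ξ]? ≠ some (linv (ξ (cancelLen l ξ))) := by
  intro h1
  have hm := cancelLen_mem l ξ
  have : cancelLen l ξ + 1 ≤ cancelLen l ξ := by
    refine le_csSup ⟨l.length, fun j hj => hj.1⟩ ⟨h, ?_⟩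
    intro i hi
    rcases Nat.lt_succ_iff_lt_or_eq.1 hi with h2 | h2
    · exact hm.2 i h2
    · rw [h2]; exact h1
  omega

theorem actSeq_red (g : F n) (ξ : Boundary n) : IsRed (actSeq g ξ.1) := by
  have hm := cancelLen_mem (rword g) ξ.1
  have hmax := cancelLen_max (rword g) ξ.1
  intro i
  unfold actSeq
  set c := cancelLen (rword g) ξ.1 with hc
  have hred := (isReduced_iff _).1 (rword_red g)
  rw [List.isChain_iff_getElem] at hred
  by_cases h1 : i + 1 < (rword g).length - c
  · rw [dif_pos h1, dif_pos (by omega)]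
    exact hred i (by omega)
  by_cases h2 : i < (rword g).length - c
  · rw [dif_neg h1, dif_pos h2]
    have h3 := hmax (by omega)
    rw [List.getElem?_reverse (by omega), List.getElem?_eq_getElem (by omega)] at h3
    have e1 : (rword g).length - 1 - c = i := by omega
    have e2 : i + 1 - ((rword g).length - c) + c = c := by omega
    rw [e2]
    simp only [e1] at h3
    intro h4
    apply h3
    rw [h4, linv_linv]
    rfl
  · rw [dif_neg h1, dif_neg h2]
    have e : i + 1 - ((rword g).length - c) + c = i - ((rword g).length - c) + c + 1 := by omega
    rw [e]
    exact ξ.2 _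

theorem bAct_val (g : F n) (ξ : Boundary n) : (bAct g ξ).1 = actSeq g ξ.1 := by
  have h : bAct g ξ = ⟨actSeq g ξ.1, actSeq_red g ξ⟩ := dif_pos (actSeq_red g ξ)
  rw [h]

theorem isTr_bAct (g : F n) (ξ : Boundary n) : IsTr g ξ (bAct g ξ) := by
  have hm := cancelLen_mem (rword g) ξ.1
  have hv := bAct_val g ξ
  have hact : ∀ i, (bAct g ξ).1 i = actSeq g ξ.1 i := fun i => by rw [hv]
  unfold actSeq at hact
  set c := cancelLen (rword g) ξ.1 with hc
  set d := (rword g).length - c with hd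
  refine ⟨c, d, fun m => ?_⟩
  have h1 : bpre (bAct g ξ) d = (rword g).take d := by
    apply List.ext_getElem
    · simp [bpre]; omega
    · intro i hi1 hi2
      simp only [length_bpre] at hi1
      simp only [bpre, List.getElem_map, List.getElem_range, List.getElem_take, hact]
      rw [dif_pos hi1]; rfl
  have h2 : (rword g).drop d = FreeGroup.invRev (bpre ξ c) := by
    rw [invRev_eq]
    apply List.ext_getElem
    · simp [bpre]; omega
    · intro i hi1 hi2
      simp only [List.length_drop] at hi1
      have h3 := hm.2 (c - 1 - i) (by omega)
      rw [List.getElem?_reverse (by omega), List.getElem?_eq_getElem (by omega)] at h3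
      have e1 : (rword g).length - 1 - (c - 1 - i) = d + i := by omega
      simp only [e1, Option.some.injEq] at h3
      simp [bpre, h3]
  have h4 : g = pt (bAct g ξ) d * (pt ξ c)⁻¹ := by
    unfold pt
    rw [FreeGroup.inv_mk, FreeGroup.mul_mk, h1, ← h2, List.take_append_drop, mk_rword]
  have h5 : (List.range m).map (fun i => (bAct g ξ).1 (d + i))
      = (List.range m).map (fun i => ξ.1 (c + i)) := by
    apply List.map_congr_left
    intro i _
    rw [hact, dif_neg (by omega)]
    change ξ.1 (d + i - d + c) = ξ.1 (c + i)
    rw [show d + i - d + c = c + i by omega]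
  have h6 : pt ξ (c + m) = pt ξ c * FreeGroup.mk ((List.range m).map (fun i => ξ.1 (c + i))) := by
    unfold pt; rw [bpre_add, FreeGroup.mul_mk]
  have h7 : pt (bAct g ξ) (d + m)
      = pt (bAct g ξ) d * FreeGroup.mk ((List.range m).map (fun i => ξ.1 (c + i))) := by
    unfold pt; rw [bpre_add, FreeGroup.mul_mk, h5]
  rw [h6, h7]
  conv_lhs => rw [h4]
  group

theorem bAct_eq_iff {g : F n} {ξ ζ : Boundary n} : bAct g ξ = ζ ↔ IsTr g ξ ζ :=
  ⟨fun h => h ▸ isTr_bAct g ξ, fun h => (isTr_bAct g ξ).unique h⟩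

theorem bAct_mul (g h : F n) (ξ : Boundary n) : bAct g (bAct h ξ) = bAct (g * h) ξ :=
  (bAct_eq_iff.2 ((isTr_bAct h ξ).trans (isTr_bAct g _))).symm

theorem bAct_one (ξ : Boundary n) : bAct 1 ξ = ξ := bAct_eq_iff.2 (IsTr.refl ξ)

theorem dbAct_mul (g h : F n) (z : Sym2 (Boundary n)) : dbAct g (dbAct h z) = dbAct (g * h) z := by
  induction z with
  | _ ξ η => simp [dbAct, bAct_mul]

theorem dbAct_one (z : Sym2 (Boundary n)) : dbAct 1 z = z := by
  induction z with
  | _ ξ η => simp [dbAct, bAct_one]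

/-- Equivariance of limit sets: `g · ∂B ⊆ ∂(gBg⁻¹)`. -/
theorem limitSet_tr {g : F n} {ξ ζ : Boundary n} (h : IsTr g ξ ζ) {B : Subgroup (F n)}
    (hξ : ξ ∈ limitSet B) : ζ ∈ limitSet (conjSub g B) := by
  obtain ⟨c, d, h⟩ := h
  intro m
  -- the extra `|g|` letters absorb the cancellation caused by right multiplication by `g⁻¹`
  obtain ⟨a, ha, t, hat⟩ := hξ (c + (m + wlen g + 1))
  set M := m + wlen g + 1 with hM
  refine ⟨g * a * g⁻¹, ?_, ?_⟩
  · rw [mem_conjSub]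
    have : g⁻¹ * (g * a * g⁻¹) * g = a := by group
    rwa [this]
  have htail : (List.range M).map (fun i => ξ.1 (c + i))
      = (List.range M).map (fun i => ζ.1 (d + i)) :=
    List.map_congr_left fun i _ => IsTr.tail h i
  have hr : FreeGroup.IsReduced (bpre ζ (d + M) ++ t) := by
    rw [bpre_add]
    apply FreeGroup.IsReduced.append_overlap
    · rw [← bpre_add]; exact bpre_red _ _
    · rw [← htail]
      refine (rword_red a).infix ⟨bpre ξ c, [], ?_⟩
      rw [← hat, bpre_add]
      simp
    · simp [hM]
  have hga : rword (g * a) = bpre ζ (d + M) ++ t := by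
    rw [← rword_mk hr, ← FreeGroup.mul_mk]
    congr 1
    have h1 := h M
    unfold pt at h1
    rw [← h1, mul_assoc, FreeGroup.mul_mk, hat, mk_rword]
  obtain ⟨s, hs⟩ := bpre_isPrefix_bpre ζ (show m ≤ d + M by omega)
  have hlen := congrArg List.length hs
  rw [List.length_append, length_bpre, length_bpre] at hlen
  rw [← hs, List.append_assoc] at hga
  apply prefix_mul _ _ _ _ hga
  rw [wlen_inv, List.length_append]
  omega

/-! ### Moving the base point along a bi-infinite geodesic -/

/-- The boundary point obtained from `ξ` by deleting its first `N` letters. -/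
def shift (N : ℕ) (ξ : Boundary n) : Boundary n :=
  ⟨fun i => ξ.1 (N + i), fun i => ξ.2 (N + i)⟩

theorem pt_shift (N : ℕ) (ξ : Boundary n) (m : ℕ) : pt ξ N * pt (shift N ξ) m = pt ξ (N + m) := by
  unfold pt
  rw [bpre_add, FreeGroup.mul_mk]
  rfl

theorem isTr_shift (N : ℕ) (ξ : Boundary n) : IsTr (pt ξ N) (shift N ξ) ξ :=
  ⟨0, N, fun m => by rw [zero_add, pt_shift]⟩

/-- For `ξ`, `η` with different first letters: the infinite word read along the geodesic from the
`N`-th vertex of the ray to `η`, through the base point, to `ξ`. -/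
def back (N : ℕ) (η ξ : Boundary n) (h0 : ξ.1 0 ≠ η.1 0) : Boundary n :=
  ⟨fun m => if m < N then linv (η.1 (N - 1 - m)) else ξ.1 (m - N), by
    intro i
    by_cases h1 : i + 1 < N
    · simp only [h1, show i < N by omega, if_true, linv_linv]
      have := η.2 (N - 1 - (i + 1))
      rw [show N - 1 - (i + 1) + 1 = N - 1 - i by omega] at this
      intro h
      exact this h.symm
    · by_cases h2 : i < N
      · simp only [h1, h2, if_true, if_false, linv_linv]
        rw [show i + 1 - N = 0 by omega, show N - 1 - i = 0 by omega]
        exact h0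
      · simp only [h1, h2, if_false]
        rw [show i + 1 - N = i - N + 1 by omega]
        exact ξ.2 _⟩

theorem bpre_back (N : ℕ) (η ξ : Boundary n) (h0 : ξ.1 0 ≠ η.1 0) (m : ℕ) :
    bpre (back N η ξ h0) (N + m) = FreeGroup.invRev (bpre η N) ++ bpre ξ m := by
  rw [bpre_add, invRev_eq]
  congr 1
  · apply List.ext_getElem
    · simp [bpre]
    · intro i hi1 hi2
      rw [length_bpre] at hi1
      simp [bpre, back, hi1]
  · unfold bpre
    apply List.map_congr_left
    intro i _
    simp [back]

theorem pt_back (N : ℕ) (η ξ : Boundary n) (h0 : ξ.1 0 ≠ η.1 0) (m : ℕ) :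
    pt η N * pt (back N η ξ h0) (N + m) = pt ξ m := by
  unfold pt
  rw [bpre_back, ← FreeGroup.mul_mk, ← FreeGroup.inv_mk]
  group

theorem isTr_back (N : ℕ) (η ξ : Boundary n) (h0 : ξ.1 0 ≠ η.1 0) :
    IsTr (pt η N) (back N η ξ h0) ξ :=
  ⟨N, 0, fun m => by rw [pt_back, zero_add]⟩

theorem back_ne_shift (N : ℕ) (η ξ : Boundary n) (h0 : ξ.1 0 ≠ η.1 0) :
    (back N η ξ h0).1 0 ≠ (shift N η).1 0 := by
  rcases Nat.eq_zero_or_pos N with rfl | hN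
  · simpa [back, shift] using h0
  · have := η.2 (N - 1)
    rw [show N - 1 + 1 = N by omega] at this
    simpa [back, shift, hN] using this.symm

/-- Two distinct boundary points can be translated so that they have different first letters, by
moving the base point to the end of their longest common prefix. -/
theorem exists_split {ξ η : Boundary n} (h : ξ ≠ η) :
    ∃ (p : F n) (ζ θ : Boundary n), ζ.1 0 ≠ θ.1 0 ∧ bAct p ζ = ξ ∧ bAct p θ = η := by
  have hex : ∃ i, ξ.1 i ≠ η.1 i := by
    by_contra hcon
    push Not at hcon
    exact h (boundary_ext hcon)
  set N := Nat.find hex with hN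
  have hpre : pt ξ N = pt η N := by
    unfold pt bpre
    congr 1
    apply List.map_congr_left
    intro i hi
    have := Nat.find_min hex (List.mem_range.1 hi)
    push Not at this
    exact this
  refine ⟨pt ξ N, shift N ξ, shift N η, Nat.find_spec hex, ?_, ?_⟩
  · exact bAct_eq_iff.2 (isTr_shift N ξ)
  · rw [hpre]; exact bAct_eq_iff.2 (isTr_shift N η)

/-! ### Limit sets and minimal subtrees -/

theorem one_mem_tree_of_limit {B : Subgroup (F n)} {ξ η : Boundary n} (h0 : ξ.1 0 ≠ η.1 0)
    (hξ : ξ ∈ limitSet B) (hη : η ∈ limitSet B) : (1 : F n) ∈ treeVerts B := by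
  obtain ⟨a, ha, s, hs⟩ := hξ 1
  obtain ⟨b, hb, t, ht⟩ := hη 1
  exact one_mem_tree ha hb (by rw [← hs]; simp [bpre]) (by rw [← ht]; simp [bpre]) h0

/-- The geodesic between two points of `∂B` is contained in `T_B`. -/
theorem pt_mem_tree {B : Subgroup (F n)} {ξ η : Boundary n} (h0 : ξ.1 0 ≠ η.1 0)
    (hξ : ξ ∈ limitSet B) (hη : η ∈ limitSet B) (N : ℕ) : pt ξ N ∈ treeVerts B := by
  have h1 := one_mem_tree_of_limit (back_ne_shift N ξ η h0.symm)
    (limitSet_tr (isTr_back N ξ η h0.symm).symm hη) (limitSet_tr (isTr_shift N ξ).symm hξ)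
  rwa [← mem_tree_conj (pt ξ N), conjSub_conjSub, mul_inv_cancel, conjSub_one, mul_one] at h1

theorem mem_limitSet_of_pt {B : Subgroup (F n)} {ξ : Boundary n}
    (h : ∀ k, pt ξ k ∈ treeVerts B) : ξ ∈ limitSet B := by
  intro m
  rw [← rword_pt]
  exact exists_prefix_of_mem_tree (h m)

/-! ### The cylinders covering the relative double boundary -/

/-- The pair `z` lies in no cylinder of `Cyl(𝒞)`. -/
def NoCyl {r : ℕ} (A : Fin r → Subgroup (F n)) (L : ℕ) (z : Sym2 (Boundary n)) : Prop :=
  ∀ g w : F n, w ∈ FmA A L → z ∉ dbAct g '' cylinder w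

theorem noCyl_tr {r : ℕ} {A : Fin r → Subgroup (F n)} {L : ℕ} {p : F n} {z : Sym2 (Boundary n)}
    (h : NoCyl A L (dbAct p z)) : NoCyl A L z := by
  rintro g w hw ⟨y, hy, rfl⟩
  exact h (p * g) w hw ⟨y, hy, (dbAct_mul p g y).symm⟩

theorem inSystem_conj {r : ℕ} {A : Fin r → Subgroup (F n)} {B : Subgroup (F n)}
    (h : InSystem A B) (g : F n) : InSystem A (conjSub g B) := by
  obtain ⟨i, k, rfl⟩ := h
  exact ⟨i, g * k, conjSub_conjSub g k _⟩

/-- If `{ξ, η}` lies in no cylinder, each segment of length `L + 2` of the ray to `ξ` lies in the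
tree of some subgroup of the system. -/
theorem segment_in_tree {r : ℕ} {A : Fin r → Subgroup (F n)} {L : ℕ} {ξ η : Boundary n}
    (h0 : ξ.1 0 ≠ η.1 0) (hno : NoCyl A L s(ξ, η)) (k : ℕ) :
    ∃ B, InSystem A B ∧ ∀ m ≤ L + 2, pt ξ (k + m) ∈ treeVerts B := by
  have hno' : NoCyl A L s(shift k ξ, back k ξ η h0.symm) := by
    apply noCyl_tr (p := pt ξ k)
    have h1 : bAct (pt ξ k) (shift k ξ) = ξ := bAct_eq_iff.2 (isTr_shift k ξ)
    have h2 : bAct (pt ξ k) (back k ξ η h0.symm) = η := bAct_eq_iff.2 (isTr_back k ξ η h0.symm)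
    simpa [dbAct, h1, h2] using hno
  set w := pt (shift k ξ) (L + 2) with hw
  have hwC : w ∉ Ccal A L := by
    intro hC
    refine hno' 1 w ⟨w, hC, List.infix_rfl⟩ ⟨_, ?_, dbAct_one _⟩
    refine ⟨_, _, rfl, (back_ne_shift k ξ η h0.symm).symm, Or.inl ?_⟩
    unfold wordPrefixOf
    rw [hw, wlen_pt, rword_pt]
  have hwl : wlen w = L + 2 := wlen_pt _ _
  have : ∃ (i : Fin r) (B : Subgroup (F n)), GammaMem A i B ∧ pathIn w (treeVerts B) := by
    by_contra hcon
    push Not at hcon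
    exact hwC ⟨hwl, hcon⟩
  obtain ⟨i, B, ⟨⟨g, hB⟩, -⟩, hpath⟩ := this
  refine ⟨conjSub (pt ξ k) B, inSystem_conj ⟨i, g, hB⟩ _, fun m hm => ?_⟩
  rw [← pt_shift, mem_tree_conj]
  have h1 := hpath m (by rw [hwl]; exact hm)
  rwa [hw, rword_pt, take_bpre _ hm] at h1

theorem dist_pt (ξ : Boundary n) (k m : ℕ) : dist' (pt ξ k) (pt ξ (k + m)) = m := by
  unfold dist'
  rw [← pt_shift, inv_mul_cancel_left, wlen_pt]

/-- Two subgroups of the system whose trees share a segment of length `L + 1` are equal. -/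
theorem eq_of_overlap {r : ℕ} {A : Fin r → Subgroup (F n)} {L : ℕ} (hdiam : DiamBound A L)
    {B B' : Subgroup (F n)} (hB : InSystem A B) (hB' : InSystem A B') {ξ : Boundary n} {k : ℕ}
    (h1 : pt ξ k ∈ treeVerts B) (h2 : pt ξ k ∈ treeVerts B')
    (h3 : pt ξ (k + (L + 1)) ∈ treeVerts B) (h4 : pt ξ (k + (L + 1)) ∈ treeVerts B') :
    B = B' := by
  by_contra hne
  have := hdiam B B' hB hB' hne _ ⟨h1, h2⟩ _ ⟨h3, h4⟩
  rw [dist_pt] at this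
  omega

/-- Consecutive segments of length `L + 2` overlap in length `L + 1`, so a single tree contains
the whole ray. -/
theorem ray_in_tree {r : ℕ} {A : Fin r → Subgroup (F n)} {L : ℕ} (hdiam : DiamBound A L)
    {ξ η : Boundary n} (h0 : ξ.1 0 ≠ η.1 0) (hno : NoCyl A L s(ξ, η)) :
    ∃ B, InSystem A B ∧ ∀ k, pt ξ k ∈ treeVerts B := by
  choose B hB hseg using segment_in_tree h0 hno
  have hstep : ∀ k, B (k + 1) = B k := by
    intro k
    refine eq_of_overlap hdiam (hB _) (hB _) (ξ := ξ) (k := k + 1) ?_ ?_ ?_ ?_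
    · exact hseg (k + 1) 0 (by omega)
    · exact hseg k 1 (by omega)
    · exact hseg (k + 1) (L + 1) (by omega)
    · have := hseg k (L + 2) (by omega)
      rwa [show k + (L + 2) = k + 1 + (L + 1) by omega] at this
  have hconst : ∀ k, B k = B 0 := by
    intro k
    induction k with
    | zero => rfl
    | succ k ih => rw [hstep, ih]
  refine ⟨B 0, hB 0, fun k => ?_⟩
  rw [← hconst k]
  exact hseg k 0 (by omega)

/-- A geodesic through the base point contained in no cylinder of `Cyl(𝒞)` has both ends in the
limit set of one subgroup of the system. The ray to `ξ` issued from any vertex of the ray to `η`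
lies in one tree, and all these trees agree because they share the ray from `1` to `ξ`. -/
theorem limit_of_noCyl {r : ℕ} {A : Fin r → Subgroup (F n)} {L : ℕ} (hdiam : DiamBound A L)
    {ξ η : Boundary n} (h0 : ξ.1 0 ≠ η.1 0) (hno : NoCyl A L s(ξ, η)) :
    ∃ B, InSystem A B ∧ ξ ∈ limitSet B ∧ η ∈ limitSet B := by
  obtain ⟨B, hB, hray⟩ := ray_in_tree hdiam h0 hno
  refine ⟨B, hB, mem_limitSet_of_pt hray, mem_limitSet_of_pt fun N => ?_⟩
  have hno' : NoCyl A L s(back N η ξ h0, shift N η) := by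
    apply noCyl_tr (p := pt η N)
    have h1 : bAct (pt η N) (shift N η) = η := bAct_eq_iff.2 (isTr_shift N η)
    have h2 : bAct (pt η N) (back N η ξ h0) = ξ := bAct_eq_iff.2 (isTr_back N η ξ h0)
    simpa [dbAct, h1, h2] using hno
  obtain ⟨B', hB', hray'⟩ := ray_in_tree hdiam (back_ne_shift N η ξ h0) hno'
  have hback : ∀ m, pt ξ m ∈ treeVerts (conjSub (pt η N) B') := by
    intro m
    rw [← pt_back N η ξ h0, mem_tree_conj]
    exact hray' _
  have heq : B = conjSub (pt η N) B' :=
    eq_of_overlap hdiam hB (inSystem_conj hB' _) (hray 0) (hback 0) (hray _) (hback _)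
  have hN := (mem_tree_conj (pt η N) _ B').2 (hray' 0)
  rwa [pt_zero, mul_one, ← heq] at hN

/-- If the word of an element of `F_n − 𝒜` is a prefix of `ξ`, then `ξ` and `η` are not both in the
limit set of a subgroup of the system. -/
theorem not_limit_of_prefix_mem {r : ℕ} {A : Fin r → Subgroup (F n)} {L : ℕ} {ξ η : Boundary n}
    (h0 : ξ.1 0 ≠ η.1 0) {w : F n} (hw : w ∈ FmA A L) (hpre : wordPrefixOf w ξ)
    {B : Subgroup (F n)} (hB : InSystem A B) (hξ : ξ ∈ limitSet B) (hη : η ∈ limitSet B) :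
    False := by
  obtain ⟨x, hx, u, v, huv⟩ := hw
  obtain ⟨i, g, rfl⟩ := hB
  have hxl : (rword x).length = L + 2 := hx.1
  set k := u.length with hk
  have hb : bpre ξ (k + (L + 2)) = u ++ rword x := by
    have h1 : u ++ rword x <+: bpre ξ (wlen w) := by
      rw [hpre, ← huv]; exact List.prefix_append _ _
    have h2 := List.prefix_iff_eq_take.1 h1
    rw [List.length_append, hxl, ← hk, take_bpre] at h2
    · exact h2.symm
    · have := h1.length_le
      rwa [List.length_append, hxl, length_bpre] at this
  have hx' : ∀ m ≤ L + 2, pt ξ k * FreeGroup.mk ((rword x).take m) = pt ξ (k + m) := by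
    intro m hm
    have hu : bpre ξ k = u := by
      rw [← take_bpre ξ (show k ≤ k + (L + 2) by omega), hb, hk, List.take_left']
      rfl
    unfold pt
    rw [FreeGroup.mul_mk, ← take_bpre ξ (show k + m ≤ k + (L + 2) by omega), hb, hu, hk,
      List.take_length_add_append]
  have hmem : ∀ m ≤ L + 2, FreeGroup.mk ((rword x).take m) ∈
      treeVerts (conjSub (pt ξ k)⁻¹ (conjSub g (A i))) := by
    intro m hm
    rw [← mem_tree_conj (pt ξ k), hx' m hm, conjSub_conjSub, mul_inv_cancel, conjSub_one]
    exact pt_mem_tree h0 hξ hη _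
  refine hx.2 i _ ⟨⟨(pt ξ k)⁻¹ * g, conjSub_conjSub _ _ _⟩, ?_⟩ fun m hm => hmem m (hx.1 ▸ hm)
  have := hmem 0 (by omega)
  simpa [FreeGroup.one_eq_mk] using this

theorem mem_relSet_iff {r : ℕ} {A : Fin r → Subgroup (F n)} {L : ℕ} (hdiam : DiamBound A L)
    (z : Sym2 (Boundary n)) (hz : ¬ z.IsDiag) :
    z ∈ relSet A ↔ ∃ g w : F n, w ∈ FmA A L ∧ z ∈ dbAct g '' cylinder w := by
  constructor
  · rintro ⟨-, hnot⟩
    by_contra hcon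
    have hno : NoCyl A L z := fun g w hw hmem => hcon ⟨g, w, hw, hmem⟩
    apply hnot
    induction z with
    | _ ξ η =>
      obtain ⟨p, ζ, θ, h0, rfl, rfl⟩ := exists_split (show ξ ≠ η from hz)
      have hno' : NoCyl A L s(ζ, θ) := noCyl_tr (p := p) hno
      obtain ⟨B, hB, h1, h2⟩ := limit_of_noCyl hdiam h0 hno'
      obtain ⟨i, g, hB'⟩ := inSystem_conj hB p
      refine ⟨i, g, _, _, rfl, ?_, ?_⟩
      · rw [← hB']; exact limitSet_tr (isTr_bAct p ζ) h1
      · rw [← hB']; exact limitSet_tr (isTr_bAct p θ) h2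
  · rintro ⟨g, w, hw, y, ⟨ξ, η, rfl, h0, hpre⟩, rfl⟩
    refine ⟨hz, ?_⟩
    rintro ⟨i, k, ξ', η', heq, h1, h2⟩
    have hboth : bAct g ξ ∈ limitSet (conjSub k (A i)) ∧
        bAct g η ∈ limitSet (conjSub k (A i)) := by
      change s(bAct g ξ, bAct g η) = s(ξ', η') at heq
      rcases Sym2.eq_iff.1 heq with ⟨e1, e2⟩ | ⟨e1, e2⟩
      · rw [e1, e2]; exact ⟨h1, h2⟩
      · rw [e1, e2]; exact ⟨h2, h1⟩
    have hξ := limitSet_tr (isTr_bAct g ξ).symm hboth.1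
    have hη := limitSet_tr (isTr_bAct g η).symm hboth.2
    have hB : InSystem A (conjSub g⁻¹ (conjSub k (A i))) := inSystem_conj ⟨i, k, rfl⟩ _
    rcases hpre with hp | hp
    · exact not_limit_of_prefix_mem h0 hw hp hB hξ hη
    · exact not_limit_of_prefix_mem h0.symm hw hp hB hη hξ

/-! ### Openness of the cylinders -/

theorem continuous_coord (i : ℕ) : Continuous fun ξ : Boundary n => ξ.1 i :=
  (continuous_apply i).comp continuous_subtype_val

theorem cancelLen_congr (l : List (Letter n)) {ξ ζ : ℕ → Letter n}
    (h : ∀ i < l.length, ξ i = ζ i) : cancelLen l ξ = cancelLen l ζ := by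
  unfold cancelLen
  congr 1
  ext j
  constructor
  · rintro ⟨h1, h2⟩
    exact ⟨h1, fun i hi => by rw [h2 i hi, h i (by omega)]⟩
  · rintro ⟨h1, h2⟩
    exact ⟨h1, fun i hi => by rw [h2 i hi, h i (by omega)]⟩

theorem actSeq_congr (g : F n) (m : ℕ) {ξ ζ : ℕ → Letter n}
    (h : ∀ i < m + wlen g + 1, ξ i = ζ i) : actSeq g ξ m = actSeq g ζ m := by
  have hc : cancelLen (rword g) ξ = cancelLen (rword g) ζ :=
    cancelLen_congr _ fun i hi => h i (by unfold wlen; omega)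
  have hm := (cancelLen_mem (rword g) ζ).1
  unfold actSeq
  simp only [hc]
  split
  · rfl
  · exact h _ (by unfold wlen; omega)

theorem continuous_bAct (g : F n) : Continuous (bAct g : Boundary n → Boundary n) := by
  refine Continuous.subtype_mk (p := IsRed) (f := fun ξ : Boundary n => actSeq g ξ.1) ?_
    (fun ξ => actSeq_red g ξ) |>.congr ?_
  · refine continuous_pi fun m => ?_
    apply IsLocallyConstant.continuous
    rw [IsLocallyConstant.iff_eventually_eq]
    intro ξ
    have : ∀ᶠ ζ in nhds ξ, ∀ i ∈ Finset.range (m + wlen g + 1), ζ.1 i = ξ.1 i := by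
      rw [Filter.eventually_all_finset]
      intro i _
      exact (continuous_coord i).continuousAt.eventually
        (IsOpen.mem_nhds (isOpen_discrete {ξ.1 i}) rfl)
    filter_upwards [this] with ζ hζ
    exact actSeq_congr g m fun i hi => hζ i (Finset.mem_range.2 hi)
  · intro ξ
    exact Subtype.ext (bAct_val g ξ).symm

theorem isOpen_prefix_set (w : F n) : IsOpen {ξ : Boundary n | wordPrefixOf w ξ} := by
  have hc : Continuous fun ξ : Boundary n => fun i : Fin (wlen w) => ξ.1 i :=
    continuous_pi fun i => continuous_coord i
  have heq : {ξ : Boundary n | wordPrefixOf w ξ} =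
      (fun ξ : Boundary n => fun i : Fin (wlen w) => ξ.1 i) ⁻¹'
        {f | List.ofFn f = rword w} := by
    ext ξ
    have : bpre ξ (wlen w) = List.ofFn fun i : Fin (wlen w) => ξ.1 i := by
      apply List.ext_getElem <;> simp [bpre]
    change bpre ξ (wlen w) = rword w ↔ List.ofFn (fun i : Fin (wlen w) => ξ.1 i) = rword w
    rw [this]
  rw [heq]
  exact (isOpen_discrete _).preimage hc

theorem isOpen_cylinder (w : F n) : IsOpen (cylinder w) := by
  have hq : Topology.IsQuotientMap (fun p : Boundary n × Boundary n => s(p.1, p.2)) :=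
    isQuotientMap_quot_mk
  rw [← hq.isOpen_preimage]
  have heq : (fun p : Boundary n × Boundary n => s(p.1, p.2)) ⁻¹' cylinder w =
      {p | p.1.1 0 ≠ p.2.1 0} ∩
        (Prod.fst ⁻¹' {ξ | wordPrefixOf w ξ} ∪ Prod.snd ⁻¹' {ξ | wordPrefixOf w ξ}) := by
    ext ⟨ξ, η⟩
    constructor
    · rintro ⟨ξ', η', he, h0, hp⟩
      rcases Sym2.eq_iff.1 he with ⟨e1, e2⟩ | ⟨e1, e2⟩
      · change ξ = ξ' at e1
        change η = η' at e2
        subst e1; subst e2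
        exact ⟨h0, hp⟩
      · change ξ = η' at e1
        change η = ξ' at e2
        subst e1; subst e2
        exact ⟨h0.symm, hp.symm⟩
    · rintro ⟨h0, hp⟩
      exact ⟨ξ, η, rfl, h0, hp⟩
  rw [heq]
  refine IsOpen.inter ?_ (IsOpen.union ?_ ?_)
  · exact isOpen_ne_fun ((continuous_coord 0).comp continuous_fst)
      ((continuous_coord 0).comp continuous_snd)
  · exact (isOpen_prefix_set w).preimage continuous_fst
  · exact (isOpen_prefix_set w).preimage continuous_snd

theorem continuous_dbAct (g : F n) :
    Continuous (dbAct g : Sym2 (Boundary n) → Sym2 (Boundary n)) := by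
  have hq : Topology.IsQuotientMap (fun p : Boundary n × Boundary n => s(p.1, p.2)) :=
    isQuotientMap_quot_mk
  rw [hq.continuous_iff]
  exact hq.continuous.comp ((continuous_bAct g).prodMap (continuous_bAct g))

theorem isOpen_translate (g w : F n) : IsOpen (dbAct g '' cylinder w) := by
  have heq : dbAct g '' cylinder w = dbAct g⁻¹ ⁻¹' cylinder w := by
    ext z
    constructor
    · rintro ⟨y, hy, rfl⟩
      change dbAct g⁻¹ (dbAct g y) ∈ cylinder w
      rwa [dbAct_mul, inv_mul_cancel, dbAct_one]
    · intro hz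
      exact ⟨_, hz, by rw [dbAct_mul, mul_inv_cancel, dbAct_one]⟩
  rw [heq]
  exact (isOpen_cylinder w).preimage (continuous_dbAct g⁻¹)

end Aux

/-- The relative double boundary is the union of the cylinders in Cyl(𝒞); in
particular it is an open subset of ∂²F_n. -/
theorem statement_5 (n r L : ℕ) (hn : 2 ≤ n) (A : Fin r → Subgroup (F n))
    (hsys : IsSystem A) (hmal : SystemMalnormal A) (hL : 1 ≤ L)
    (hdiam : DiamBound A L) (hbase : ∀ i, (1 : F n) ∈ treeVerts (A i)) :
    (∀ z : Sym2 (Boundary n), ¬ z.IsDiag →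
        (z ∈ relSet A ↔ ∃ g w : F n, w ∈ FmA A L ∧ z ∈ dbAct g '' cylinder w)) ∧
      IsOpen { z : { z : Sym2 (Boundary n) // ¬ z.IsDiag } |
        (z : Sym2 (Boundary n)) ∈ relSet A } := by
  refine ⟨fun z hz => mem_relSet_iff hdiam z hz, ?_⟩
  have heq : { z : { z : Sym2 (Boundary n) // ¬ z.IsDiag } |
        (z : Sym2 (Boundary n)) ∈ relSet A } =
      Subtype.val ⁻¹' (⋃ (g : F n) (w : F n) (_ : w ∈ FmA A L), dbAct g '' cylinder w) := by
    ext ⟨z, hz⟩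
    change z ∈ relSet A ↔ z ∈ ⋃ (g : F n) (w : F n) (_ : w ∈ FmA A L), dbAct g '' cylinder w
    rw [mem_relSet_iff hdiam z hz]
    simp only [Set.mem_iUnion, exists_prop]
  rw [heq]
  exact (isOpen_iUnion fun g => isOpen_iUnion fun w => isOpen_iUnion fun _ =>
    isOpen_translate g w).preimage continuous_subtype_val

end RelCurr
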